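/- Let ς, k, r, w be real numbers with 0 < ς < 1 and k > 1/(1 − ς), with w a constant disturbance. Let q, p, v, a : ℝ → ℝ be differentiable functions satisfying q'(t) = r − (p(t) + v(t) + a(t)), p' = v, v' = a, a'(t) = ( −a(t) + k·q(t) )/ς + w for all t ≥ 0. Then (q(t), p(t), v(t), a(t)) → (−ς·w/k, r, 0, 0) as t → ∞; in particular the output y = p + v + a converges to the reference r, so the integral-action policy achieves null steady-state spacing error despite the constant disturbance. -/

import Mathlib

open Filter Topology

/-! A solution of `x' = A x` is annihilated by `χ(A) = ∏ (A - μᵢ)`, by Cayley–Hamilton. Peeling off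
one factor at a time, `y = (A - μ) x` is again a solution and `x' = μ x + y` is a scalar equation
forced by `y`. If `Re μ < 0` and `y → 0` then `x → 0`, so `x → 0` as soon as all roots of `χ` lie in
the open left half-plane. For the closed loop `χ = X⁴ + X³/ς + k/ς (X² + X + 1)`, to which the
Routh–Hurwitz criterion applies because `k > 1 / (1 - ς)` means `k ς + 1 < k`. -/

open Polynomial ComplexConjugate

section ForcedScalarEquation

theorem tendsto_gronwallBound_atTop {δ K ε : ℝ} (hK : K < 0) :
    Tendsto (gronwallBound δ K ε) atTop (𝓝 (-(ε / K))) := by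
  have hexp : Tendsto (fun t => Real.exp (K * t)) atTop (𝓝 0) :=
    Real.tendsto_exp_atBot.comp (tendsto_id.const_mul_atTop_of_neg hK)
  rw [gronwallBound_of_K_ne_0 hK.ne]
  simpa using (hexp.const_mul δ).add ((hexp.sub_const 1).const_mul (ε / K))

variable {E : Type*} [NormedAddCommGroup E] [NormedSpace ℂ E] {μ : ℂ} {x f : ℝ → E}

theorem norm_le_gronwallBound_of_hasDerivAt_smul_add {a ε : ℝ}
    (hx : ∀ t, a ≤ t → HasDerivAt x (μ • x t + f t) t) (hf : ∀ t, a ≤ t → ‖f t‖ ≤ ε)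
    {t : ℝ} (ht : a ≤ t) : ‖x t‖ ≤ gronwallBound ‖x a‖ μ.re ε (t - a) := by
  have norm_cexp (s : ℝ) : ‖Complex.exp (-μ * s)‖ = Real.exp (-μ.re * s) := by
    simp [Complex.norm_exp]
  have hderiv : ∀ s, a ≤ s → HasDerivAt (fun s : ℝ => Complex.exp (-μ * s) • x s)
      (Complex.exp (-μ * s) • f s) s := fun s hs => by
    have hexp := ((hasDerivAt_id s).ofReal_comp.const_mul (-μ)).cexp
    refine (hexp.smul (hx s hs)).congr_deriv ?_
    simp only [id_eq, Complex.ofReal_one]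
    module
  have hboundary (s : ℝ) :
      HasDerivAt (fun s => Real.exp (-μ.re * s) * gronwallBound ‖x a‖ μ.re ε (s - a))
        (Real.exp (-μ.re * s) * ε) s := by
    have hexp := ((hasDerivAt_id s).const_mul (-μ.re)).exp
    refine (hexp.mul (hasDerivAt_gronwallBound_shift _ _ _ _ _)).congr_deriv ?_
    simp only [id_eq]
    ring
  have hle := image_norm_le_of_norm_deriv_right_le_deriv_boundary (b := t)
    (fun s hs => (hderiv s hs.1).continuousAt.continuousWithinAt)
    (fun s hs => (hderiv s hs.1).hasDerivWithinAt)
    (by rw [norm_smul, norm_cexp, sub_self, gronwallBound_x0]) hboundary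
    (fun s hs => by
      rw [norm_smul, norm_cexp]
      gcongr
      exact hf s hs.1)
    ⟨ht, le_rfl⟩
  rw [norm_smul, norm_cexp] at hle
  exact le_of_mul_le_mul_left hle (Real.exp_pos _)

theorem tendsto_zero_of_hasDerivAt_smul_add (hμ : μ.re < 0)
    (hx : ∀ᶠ t in atTop, HasDerivAt x (μ • x t + f t) t) (hf : Tendsto f atTop (𝓝 0)) :
    Tendsto x atTop (𝓝 0) := by
  rw [NormedAddGroup.tendsto_nhds_zero] at hf ⊢
  intro ε hε
  have hδ : 0 < -μ.re * (ε / 2) := mul_pos (neg_pos.2 hμ) (half_pos hε)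
  obtain ⟨a, ha⟩ := eventually_atTop.1 (hx.and (hf _ hδ))
  have hvalue : -(-μ.re * (ε / 2) / μ.re) = ε / 2 := by field_simp [hμ.ne]
  have hshift : Tendsto (fun t => t - a) atTop atTop :=
    tendsto_atTop_add_const_right _ (-a) tendsto_id
  have hlim := (tendsto_gronwallBound_atTop (δ := ‖x a‖) (ε := -μ.re * (ε / 2)) hμ).comp hshift
  rw [hvalue] at hlim
  filter_upwards [hlim.eventually_lt_const (half_lt_self hε), eventually_ge_atTop a] with t hlt hat
  exact (norm_le_gronwallBound_of_hasDerivAt_smul_add (fun s hs => (ha s hs).1)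
    (fun s hs => (ha s hs).2.le) hat).trans_lt hlt

end ForcedScalarEquation

section LinearSystem

/-- A Hurwitz polynomial: every complex root has negative real part. The coefficient ring is left
open so that real and complex polynomials are treated alike; the zero polynomial is excluded, as
every complex number is a root of it. -/
def IsHurwitz {R : Type*} [CommSemiring R] [Algebra R ℂ] (P : R[X]) : Prop :=
  ∀ z : ℂ, aeval z P = 0 → z.re < 0

theorem IsHurwitz.ne_zero {R : Type*} [CommSemiring R] [Algebra R ℂ] {P : R[X]}
    (hP : IsHurwitz P) : P ≠ 0 := by
  rintro rfl
  simpa using hP 0 (map_zero _)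

theorem IsHurwitz.map {R S : Type*} [CommSemiring R] [CommSemiring S] [Algebra R S]
    [Algebra R ℂ] [Algebra S ℂ] [IsScalarTower R S ℂ] {P : R[X]} (hP : IsHurwitz P) :
    IsHurwitz (P.map (algebraMap R S)) :=
  fun z hz => hP z (by rwa [aeval_map_algebraMap] at hz)

variable {E : Type*} [NormedAddCommGroup E] [NormedSpace ℂ E]

theorem tendsto_zero_of_aeval_prod_X_sub_C_apply_eq_zero (A : E →L[ℂ] E) (s : Multiset ℂ)
    (hs : ∀ μ ∈ s, μ.re < 0) {x : ℝ → E} (hx : ∀ᶠ t in atTop, HasDerivAt x (A (x t)) t)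
    (hsx : ∀ᶠ t in atTop, aeval A (s.map fun μ => X - C μ).prod (x t) = 0) :
    Tendsto x atTop (𝓝 0) := by
  induction s using Multiset.induction generalizing x with
  | empty =>
    refine tendsto_const_nhds.congr' ?_
    filter_upwards [hsx] with t ht
    simpa using ht.symm
  | cons μ s ih =>
    rw [Multiset.forall_mem_cons] at hs
    let y : ℝ → E := fun t => (A - algebraMap ℂ _ μ) (x t)
    have hy : ∀ᶠ t in atTop, HasDerivAt y (A (y t)) t := by
      filter_upwards [hx] with t ht
      refine (((A - algebraMap ℂ _ μ).restrictScalars ℝ).hasFDerivAt.comp_hasDerivAt t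
        ht).congr_deriv ?_
      simp [y, Algebra.algebraMap_eq_smul_one]
    have hsy : ∀ᶠ t in atTop, aeval A (s.map fun μ => X - C μ).prod (y t) = 0 := by
      filter_upwards [hsx] with t ht
      rw [Multiset.map_cons, Multiset.prod_cons, mul_comm] at ht
      rwa [map_mul, map_sub, aeval_X, aeval_C] at ht
    refine tendsto_zero_of_hasDerivAt_smul_add hs.1 ?_ (ih hs.2 hy hsy)
    filter_upwards [hx] with t ht
    exact ht.congr_deriv (by simp [y, Algebra.algebraMap_eq_smul_one])

theorem tendsto_zero_of_isHurwitz_of_aeval_apply_eq_zero (A : E →L[ℂ] E) {P : ℂ[X]}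
    (hP : IsHurwitz P) {x : ℝ → E} (hx : ∀ᶠ t in atTop, HasDerivAt x (A (x t)) t)
    (hPx : ∀ᶠ t in atTop, aeval A P (x t) = 0) : Tendsto x atTop (𝓝 0) := by
  refine tendsto_zero_of_aeval_prod_X_sub_C_apply_eq_zero A P.roots
    (fun μ hμ => hP μ ((coe_aeval_eq_eval μ).symm ▸ isRoot_of_mem_roots hμ)) hx ?_
  filter_upwards [hPx] with t ht
  rw [(IsAlgClosed.splits P).eq_prod_roots] at ht
  simpa [Algebra.algebraMap_eq_smul_one, hP.ne_zero] using ht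

variable {n : Type*} [Fintype n] [DecidableEq n]

theorem tendsto_zero_of_isHurwitz_charpoly_complex {A : Matrix n n ℂ} (hA : IsHurwitz A.charpoly)
    {x : ℝ → n → ℂ} (hx : ∀ᶠ t in atTop, HasDerivAt x (A.mulVec (x t)) t) :
    Tendsto x atTop (𝓝 0) := by
  let toCLM := (Matrix.toLinAlgEquiv' (R := ℂ)).trans (Module.End.toContinuousLinearMap (n → ℂ))
  have cayley_hamilton : aeval (toCLM A) A.charpoly = 0 := by
    rw [aeval_algHom_apply, Matrix.aeval_self_charpoly, map_zero]
  exact tendsto_zero_of_isHurwitz_of_aeval_apply_eq_zero (toCLM A) hA hx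
    (Eventually.of_forall fun t => by simp [cayley_hamilton])

theorem tendsto_zero_of_isHurwitz_charpoly {A : Matrix n n ℝ} (hA : IsHurwitz A.charpoly)
    {x : ℝ → n → ℝ} (hx : ∀ᶠ t in atTop, HasDerivAt x (A.mulVec (x t)) t) :
    Tendsto x atTop (𝓝 0) := by
  have hAC : IsHurwitz (A.map (algebraMap ℝ ℂ)).charpoly := by
    rw [Matrix.charpoly_map]
    exact hA.map
  have hxC : Tendsto (fun t i => (x t i : ℂ)) atTop (𝓝 0) := by
    refine tendsto_zero_of_isHurwitz_charpoly_complex hAC ?_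
    filter_upwards [hx] with t ht
    refine hasDerivAt_pi.2 fun i => (hasDerivAt_pi.1 ht i).ofReal_comp.congr_deriv ?_
    simp [Matrix.mulVec, dotProduct]
  rw [tendsto_pi_nhds] at hxC ⊢
  exact fun i => by simpa [Function.comp_def] using (Complex.continuous_re.tendsto 0).comp (hxC i)

theorem tendsto_of_isHurwitz_charpoly {A : Matrix n n ℝ} (hA : IsHurwitz A.charpoly)
    {x : ℝ → n → ℝ} {x₀ : n → ℝ}
    (hx : ∀ᶠ t in atTop, HasDerivAt x (A.mulVec (x t - x₀)) t) : Tendsto x atTop (𝓝 x₀) := by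
  rw [← tendsto_sub_nhds_zero_iff]
  exact tendsto_zero_of_isHurwitz_charpoly hA (hx.mono fun t ht => ht.sub_const x₀)

end LinearSystem

section RouthHurwitz

variable {s u v : ℂ}

theorem re_mul_add_mul_mul_conj_nonneg {β : ℝ} (hs : 0 ≤ s.re) (hβ : 0 ≤ β)
    (huv : 0 ≤ (u * conj v).re) : 0 ≤ ((s * u + β * v) * conj u).re := by
  have expand : ((s * u + β * v) * conj u).re =
      s.re * Complex.normSq u + β * (u * conj v).re := by
    simp only [Complex.mul_re, Complex.add_re, Complex.add_im, Complex.mul_im, Complex.ofReal_re,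
      Complex.ofReal_im, Complex.conj_re, Complex.conj_im, Complex.normSq_apply]
    ring
  rw [expand]
  have := Complex.normSq_nonneg u
  positivity

theorem eq_zero_of_add_mul_add_mul_eq_zero {γ δ : ℝ} (hs : 0 ≤ s.re) (hγ : 0 < γ) (hδ : 0 < δ)
    (huv : 0 ≤ (u * conj v).re) (h : (s + δ) * u + γ * v = 0) : u = 0 ∧ v = 0 := by
  have expand : ((s + δ) * u + γ * v) * conj u =
      (s * u + γ * v) * conj u + δ * Complex.normSq u := by
    rw [← Complex.mul_conj]
    ring
  have hu : u = 0 := by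
    have hre := congrArg Complex.re expand
    rw [h] at hre
    simp only [zero_mul, Complex.zero_re, Complex.add_re, ← Complex.ofReal_mul,
      Complex.ofReal_re] at hre
    have hδu : δ * Complex.normSq u ≤ 0 := by
      linarith [re_mul_add_mul_mul_conj_nonneg hs hγ.le huv]
    exact Complex.normSq_eq_zero.1
      ((nonpos_of_mul_nonpos_right hδu hδ).antisymm (Complex.normSq_nonneg u))
  exact ⟨hu, by simpa [hu, hγ.ne'] using h⟩

theorem re_neg_of_schwarz_quartic_eq_zero {α β γ δ : ℝ} (hα : 0 < α) (hβ : 0 < β) (hγ : 0 < γ)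
    (hδ : 0 < δ) (h : (s + δ) * (s * (s * s + α) + β * s) + γ * (s * s + α) = 0) :
    s.re < 0 := by
  by_contra! hs
  -- Consecutive terms of `D₀ = 1`, `D₁ = s`, `D₂ = s D₁ + α D₀`, `D₃ = s D₂ + β D₁` satisfy
  -- `0 ≤ Re (Dᵢ₊₁ * conj Dᵢ)` on the closed right half-plane.
  have h₁ : 0 ≤ (s * conj 1).re := by simpa using hs
  have h₂ : 0 ≤ ((s * s + α) * conj s).re := by
    simpa only [mul_one] using re_mul_add_mul_mul_conj_nonneg hs hα.le h₁
  have h₃ : 0 ≤ ((s * (s * s + α) + β * s) * conj (s * s + α)).re :=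
    re_mul_add_mul_mul_conj_nonneg hs hβ.le h₂
  obtain ⟨hD₃, hD₂⟩ := eq_zero_of_add_mul_add_mul_eq_zero hs hγ hδ h₃ h
  have hs₀ : s = 0 := by
    rw [hD₂, mul_zero, zero_add] at hD₃
    exact (mul_eq_zero.1 hD₃).resolve_left (mod_cast hβ.ne')
  simp [hs₀, hα.ne'] at hD₂

theorem isHurwitz_quartic {a₀ a₁ a₂ a₃ : ℝ} (h₀ : 0 < a₀) (h₁ : 0 < a₁) (h₃ : 0 < a₃)
    (h : a₁ ^ 2 + a₃ ^ 2 * a₀ < a₁ * a₂ * a₃) :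
    IsHurwitz (X ^ 4 + C a₃ * X ^ 3 + C a₂ * X ^ 2 + C a₁ * X + C a₀) := by
  intro z hz
  -- The Schwarz parameters come from the Routh continued fraction of the quartic:
  -- `δ = a₃`, `γ = a₂ - a₁ / a₃`, `α = a₀ / γ`, `β = a₁ / a₃ - α`.
  obtain ⟨γ, rfl⟩ : ∃ γ, a₂ = γ + a₁ / a₃ := ⟨a₂ - a₁ / a₃, by ring⟩
  have hgap : a₃ * a₀ < a₁ * γ := by
    have expand : a₁ * (γ + a₁ / a₃) * a₃ = a₁ ^ 2 + a₃ * (a₁ * γ) := by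
      field_simp
      ring
    exact lt_of_mul_lt_mul_left (by linarith : a₃ * (a₃ * a₀) < a₃ * (a₁ * γ)) h₃.le
  have hγ : 0 < γ := pos_of_mul_pos_right ((mul_pos h₃ h₀).trans hgap) h₁.le
  have hβ : 0 < a₁ / a₃ - a₀ / γ := by
    rw [sub_pos, div_lt_div_iff₀ hγ h₃]
    linarith
  refine re_neg_of_schwarz_quartic_eq_zero (div_pos h₀ hγ) hβ hγ h₃ ?_
  have hγC : (γ : ℂ) ≠ 0 := mod_cast hγ.ne'
  have h₃C : (a₃ : ℂ) ≠ 0 := mod_cast h₃.ne'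
  simp only [map_add, map_mul, map_pow, aeval_X, aeval_C, Complex.coe_algebraMap] at hz
  rw [← hz]
  push_cast
  field_simp
  ring

end RouthHurwitz

/-- The state matrix of the closed loop in the coordinates `(q, p, v, a)`. -/
noncomputable def closedLoopMatrix (ς k : ℝ) : Matrix (Fin 4) (Fin 4) ℝ :=
  !![0, -1, -1, -1;
     0, 0, 1, 0;
     0, 0, 0, 1;
     k / ς, 0, 0, -(1 / ς)]

theorem charpoly_closedLoopMatrix (ς k : ℝ) : (closedLoopMatrix ς k).charpoly =
    X ^ 4 + C (1 / ς) * X ^ 3 + C (k / ς) * X ^ 2 + C (k / ς) * X + C (k / ς) := by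
  have hcharmatrix : (closedLoopMatrix ς k).charmatrix =
      !![X, 1, 1, 1;
         0, X, -1, 0;
         0, 0, X, -1;
         -C (k / ς), 0, 0, X + C (1 / ς)] := by
    ext1 i j
    fin_cases i <;> fin_cases j <;> simp [closedLoopMatrix]
  rw [Matrix.charpoly, hcharmatrix]
  simp [Matrix.det_succ_row_zero, Fin.sum_univ_succ, Fin.succAbove]
  ring

theorem closedLoopMatrix_mulVec (ς k q p v a : ℝ) :
    (closedLoopMatrix ς k).mulVec ![q, p, v, a] = ![-(p + v + a), v, a, (-a + k * q) / ς] := by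
  ext i
  fin_cases i <;> simp [closedLoopMatrix, Matrix.mulVec, dotProduct, Fin.sum_univ_succ] <;> ring

theorem isHurwitz_charpoly_closedLoopMatrix {ς k : ℝ} (hς : 0 < ς) (hς1 : ς < 1)
    (hk : 1 / (1 - ς) < k) : IsHurwitz (closedLoopMatrix ς k).charpoly := by
  have hς' : 0 < 1 - ς := sub_pos.2 hς1
  have hk₀ : 0 < k := (one_div_pos.2 hς').trans hk
  rw [charpoly_closedLoopMatrix]
  refine isHurwitz_quartic (by positivity) (by positivity) (by positivity) ?_
  have hgain : k * ς + 1 < k := by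
    rw [div_lt_iff₀ hς'] at hk
    linarith
  calc (k / ς) ^ 2 + (1 / ς) ^ 2 * (k / ς) = k / ς ^ 3 * (k * ς + 1) := by field_simp
    _ < k / ς ^ 3 * k := by gcongr
    _ = k / ς * (k / ς) * (1 / ς) := by field_simp

/-- Integral-action policy under a constant disturbance `w`: the closed loop
`q' = r - (p + v + a)`, `p' = v`, `v' = a`, `a' = (-a + k q)/ς + w` with
`0 < ς < 1` and `k > 1/(1 - ς)` satisfies
`(q, p, v, a) → (-ς w / k, r, 0, 0)` as `t → ∞`; in particular the output
`y = p + v + a` converges to the reference `r`: null steady-state spacing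
error despite the constant disturbance. -/
theorem stmt_16 (ς k r w : ℝ) (hς : 0 < ς) (hς1 : ς < 1) (hk : k > 1 / (1 - ς))
    (q p v a : ℝ → ℝ)
    (hq : Differentiable ℝ q) (hp : Differentiable ℝ p)
    (hv : Differentiable ℝ v) (ha : Differentiable ℝ a)
    (hqe : ∀ t, 0 ≤ t → deriv q t = r - (p t + v t + a t))
    (hpv : ∀ t, 0 ≤ t → deriv p t = v t)
    (hva : ∀ t, 0 ≤ t → deriv v t = a t)
    (hcl : ∀ t, 0 ≤ t → deriv a t = (-a t + k * q t) / ς + w) :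
    Tendsto (fun t => (q t, p t, v t, a t)) atTop (𝓝 (-(ς * w / k), r, 0, 0)) := by
  have hk₀ : k ≠ 0 := ((one_div_pos.2 (sub_pos.2 hς1)).trans hk).ne'
  have hstate : Tendsto (fun t => ![q t, p t, v t, a t]) atTop (𝓝 ![-(ς * w / k), r, 0, 0]) := by
    refine tendsto_of_isHurwitz_charpoly (isHurwitz_charpoly_closedLoopMatrix hς hς1 hk) ?_
    filter_upwards [eventually_ge_atTop 0] with t ht
    have hderiv : HasDerivAt (fun t => ![q t, p t, v t, a t])
        ![deriv q t, deriv p t, deriv v t, deriv a t] t := by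
      rw [hasDerivAt_pi]
      intro i
      fin_cases i
      exacts [(hq t).hasDerivAt, (hp t).hasDerivAt, (hv t).hasDerivAt, (ha t).hasDerivAt]
    refine hderiv.congr_deriv ?_
    have herror : r - (p t + v t + a t) = -(p t - r + v t + a t) := by ring
    have hcontrol : (-a t + k * q t) / ς + w = (-a t + k * (q t - -(ς * w / k))) / ς := by
      field_simp
      ring
    simp only [hqe t ht, hpv t ht, hva t ht, hcl t ht, herror, hcontrol, Matrix.cons_sub_cons,
      Matrix.empty_sub_empty, closedLoopMatrix_mulVec, sub_zero]
  have hcoord := tendsto_pi_nhds.1 hstate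
  exact (hcoord 0).prodMk_nhds ((hcoord 1).prodMk_nhds ((hcoord 2).prodMk_nhds (hcoord 3)))
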